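/- arXiv:1812.00112 — 2 statements merged into one kernel-verified Lean document; each statement's English description precedes it below -/
import Mathlib

section
/- For every ε > 0, there exists a normalizing function χ : ℝ → [−1, 1] (smooth, odd, positive on (0,∞), with limits ±1 at ±∞) whose distributional Fourier transform is supported in the interval (−ε, ε). -/
open MeasureTheory
open scoped FourierTransform

theorem lemA (ε : ℝ) (hε : 0 < ε) : ∃ (G : SchwartzMap ℝ ℂ) (h : ℝ → ℝ),
    (∀ x, x ∉ Set.Ioo (-ε) ε → G x = 0) ∧ (∀ x, 𝓕 (fun y => G y) x = (h x : ℂ)) ∧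
    (∀ x, 0 ≤ h x) ∧ (∀ x, h (-x) = h x) ∧ 0 < h 0 ∧ ContDiff ℝ (⊤ : ℕ∞) h ∧ Integrable h := by
  let b : ContDiffBump (0:ℝ) := ⟨ε/4, ε/2, by positivity, by linarith⟩
  let g0 : ℝ → ℂ := fun x => (b x : ℂ)
  have hg0c : HasCompactSupport g0 := b.hasCompactSupport.comp_left (g := Complex.ofReal) rfl
  have hg0s : ContDiff ℝ (⊤ : ℕ∞) g0 := Complex.ofRealCLM.contDiff.comp b.contDiff
  let g : SchwartzMap ℝ ℂ := hg0c.toSchwartzMap hg0s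
  have hg : ∀ x, g x = (b x : ℂ) := fun x => rfl
  let f : SchwartzMap ℝ ℂ := 𝓕 g
  have hf : ∀ x, f x = ∫ v, 𝐞 (-(v * x)) • (b v : ℂ) := by
    intro x
    rw [show f x = 𝓕 (fun y => g y) x by simp [f, SchwartzMap.fourier_coe], Real.fourier_real_eq]
    rfl
  have hfev : ∀ x, f (-x) = f x := by
    intro x
    rw [hf, hf, ← integral_neg_eq_self]
    congr 1
    ext v
    simp [b.neg]
  have hfre : ∀ x, (starRingEnd ℂ) (f x) = f x := by
    intro x
    refine Eq.trans ?_ (hfev x)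
    rw [hf, hf, ← integral_conj]
    congr 1
    ext v
    simp [Circle.smul_def, ← Circle.coe_inv_eq_conj, ← AddChar.map_neg_eq_inv]
  have hfre' : ∀ x, f x = ((f x).re : ℂ) := fun x => (Complex.conj_eq_iff_re.1 (hfre x)).symm
  let G := SchwartzMap.convolution (ContinuousLinearMap.mul ℂ ℂ) g g
  have hFG : 𝓕 G = SchwartzMap.pairing (ContinuousLinearMap.mul ℂ ℂ) f f :=
    SchwartzMap.fourier_convolution _ _ _
  have hFG' : ∀ x, 𝓕 G x = (((f x).re ^ 2 : ℝ) : ℂ) := by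
    intro x
    rw [hFG, SchwartzMap.pairing_apply_apply]
    simp only [ContinuousLinearMap.mul_apply']
    rw [hfre' x]
    push_cast; simp; ring
  have hre : (fun x => (f x).re ^ 2) = fun x => (𝓕 G x).re := by
    ext x; rw [hFG', Complex.ofReal_re]
  refine ⟨G, fun x => (f x).re ^ 2, ?_, ?_, fun x => sq_nonneg _, fun x => by simp [hfev], ?_, ?_, ?_⟩
  · intro x hx
    simp only [G, SchwartzMap.convolution_apply]
    rw [MeasureTheory.convolution_def]
    apply integral_eq_zero_of_ae
    filter_upwards with t
    have key : b t = 0 ∨ b (x - t) = 0 := by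
      by_contra! hc
      have h1 : t ∈ Function.support b := hc.1
      have h2 : x - t ∈ Function.support b := hc.2
      rw [b.support_eq] at h1 h2
      simp only [Metric.mem_ball, Real.dist_eq, b, sub_zero, abs_lt] at h1 h2
      exact hx ⟨by linarith, by linarith⟩
    rcases key with k | k <;> simp [hg, k]
  · intro x
    rw [← hFG', SchwartzMap.fourier_coe]
  · have : f 0 = ((∫ v, b v : ℝ) : ℂ) := by
      rw [hf]; simp [integral_complex_ofReal]
    have hp := b.integral_pos (μ := volume)
    simp only [this, Complex.ofReal_re]
    positivity
  · rw [hre]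
    exact Complex.reCLM.contDiff.comp ((𝓕 G).smooth _)
  · rw [hre]
    exact (𝓕 G).integrable.re

theorem lemB (ε : ℝ) (G : SchwartzMap ℝ ℂ) (hG : ∀ x, x ∉ Set.Ioo (-ε) ε → G x = 0)
    (φ : SchwartzMap ℝ ℂ) (hφ : tsupport (fun x : ℝ => φ x) ∩ Set.Ioo (-ε) ε = ∅) (t : ℝ) :
    ∫ x, 𝓕 (fun y => G y) (x - t) * 𝓕 (fun y : ℝ => φ y) x = 0 := by
  let Gt : ℝ → ℂ := fun y => 𝐞 (y * t) • G y
  have hGt : Integrable Gt := by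
    have := (Real.fourierIntegral_convergent_iff (f := fun y => G y) (μ := volume) (-t)).2 G.integrable
    refine this.congr (Filter.Eventually.of_forall fun y => ?_)
    simp [Gt, mul_comm]
  have h1 : ∀ x, 𝓕 (fun y => G y) (x - t) = 𝓕 Gt x := by
    intro x
    rw [Real.fourier_real_eq, Real.fourier_real_eq]
    congr 1
    ext v
    simp only [Gt]
    rw [smul_smul, ← AddChar.map_add_eq_mul]
    congr 2; ring
  have hF : Integrable (𝓕 (fun y : ℝ => φ y)) := by
    rw [← SchwartzMap.fourier_coe]; exact (𝓕 φ).integrable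
  have h2 : ∀ x, 𝓕 (𝓕 (fun y : ℝ => φ y)) x = φ (-x) := by
    intro x
    have := Real.fourierInv_eq_fourier_neg (𝓕 (fun y : ℝ => φ y)) (-x)
    rw [neg_neg] at this
    rw [← this, Continuous.fourierInv_fourier_eq φ.continuous φ.integrable hF]
  simp_rw [h1]
  have := VectorFourier.integral_fourierIntegral_smul_eq_flip (μ := volume) (ν := volume)
    (e := 𝐞) (L := innerₗ ℝ) Real.continuous_fourierChar continuous_inner hGt hF
  have h3 : ∫ x, 𝓕 Gt x * 𝓕 (fun y : ℝ => φ y) x = ∫ x, Gt x * 𝓕 (𝓕 (fun y : ℝ => φ y)) x := by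
    have e : (innerₗ ℝ : ℝ →ₗ[ℝ] ℝ →ₗ[ℝ] ℝ).flip = innerₗ ℝ := flip_innerₗ ℝ
    rw [e] at this
    exact this
  rw [h3]
  apply integral_eq_zero_of_ae
  filter_upwards with x
  rw [h2]
  by_cases hx : x ∈ Set.Ioo (-ε) ε
  · have : φ (-x) = 0 := by
      by_contra hc
      have hm : -x ∈ tsupport (fun x : ℝ => φ x) := subset_tsupport _ hc
      have : -x ∈ tsupport (fun x : ℝ => φ x) ∩ Set.Ioo (-ε) ε :=
        ⟨hm, by linarith [hx.2], by linarith [hx.1]⟩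
      rw [hφ] at this; exact this
    simp [this]
  · simp [Gt, hG x hx]

theorem lemC (h : ℝ → ℝ) (hi : Integrable h) (he : ∀ x, h (-x) = h x) (x : ℝ) :
    2 * ∫ s in (0:ℝ)..x, h s = ∫ t, Real.sign t * h (x - t) := by
  have e0 : ∫ s in Set.Iic 0, h s = ∫ s in Set.Ioi 0, h s := by
    have := integral_comp_neg_Iic 0 h
    simpa [he] using this
  have e1 : (∫ s in Set.Iic x, h s) - ∫ s in Set.Iic 0, h s = ∫ s in (0:ℝ)..x, h s :=
    intervalIntegral.integral_Iic_sub_Iic hi.integrableOn hi.integrableOn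
  have e2 := intervalIntegral.integral_Iic_add_Ioi (b := x) hi.integrableOn hi.integrableOn
  have e3 := intervalIntegral.integral_Iic_add_Ioi (b := 0) hi.integrableOn hi.integrableOn
  have e4 : ∫ t, Real.sign t * h (x - t) = ∫ t, Real.sign (x - t) * h t := by
    rw [← integral_sub_left_eq_self (fun t => Real.sign t * h (x - t)) volume x]
    simp
  have e5 : ∫ t, Real.sign (x - t) * h t = (∫ s in Set.Iic x, h s) - ∫ s in Set.Ioi x, h s := by
    rw [← integral_indicator measurableSet_Iic, ← integral_indicator measurableSet_Ioi,
      ← integral_sub (hi.indicator measurableSet_Iic) (hi.indicator measurableSet_Ioi)]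
    apply integral_congr_ae
    have : ∀ᵐ t : ℝ, t ≠ x := by simp [ae_iff]
    filter_upwards [this] with t ht
    rcases lt_or_gt_of_ne ht with k | k
    · simp [Real.sign_of_pos (sub_pos.2 k), k.le]
    · simp [Real.sign_of_neg (sub_neg.2 k), k]
  rw [e4, e5]
  linarith

theorem lemD (h : ℝ → ℝ) (hi : Integrable h) (F : ℝ → ℂ) (hF : Integrable F)
    (hz : ∀ t, ∫ x, (h (x - t) : ℂ) * F x = 0) :
    ∫ x, ((∫ t, Real.sign t * h (x - t) : ℝ) : ℂ) * F x = 0 := by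
  have hs : Measurable Real.sign := by
    unfold Real.sign
    exact Measurable.ite measurableSet_Iio measurable_const
      (Measurable.ite measurableSet_Ioi measurable_const measurable_const)
  have h0 : Integrable (fun p : ℝ × ℝ => F p.2 * (h (-(p.1 - p.2)) : ℂ)) (volume.prod volume) :=
    hF.convolution_integrand (.mul ℂ ℂ) (g := fun s => (h (-s) : ℂ)) hi.comp_neg.ofReal
  have h1 : Integrable (fun p : ℝ × ℝ => (h (p.1 - p.2) : ℂ) * F p.1) (volume.prod volume) := by
    refine h0.swap.congr (Filter.Eventually.of_forall fun p => ?_)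
    simp [mul_comm]
  have h2 : Integrable (fun p : ℝ × ℝ => (Real.sign p.2 : ℂ) * ((h (p.1 - p.2) : ℂ) * F p.1))
      (volume.prod volume) := by
    refine h1.bdd_mul (c := 1) ?_ ?_
    · exact (Complex.measurable_ofReal.comp (hs.comp measurable_snd)).aestronglyMeasurable
    · filter_upwards with p
      rcases Real.sign_apply_eq p.2 with k | k | k <;> simp [k]
  calc _ = ∫ x, ∫ t, (Real.sign t : ℂ) * ((h (x - t) : ℂ) * F x) := by
        congr 1; ext x
        rw [← integral_complex_ofReal, ← integral_mul_const]
        congr 1; ext t; push_cast; ring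
    _ = ∫ t, ∫ x, (Real.sign t : ℂ) * ((h (x - t) : ℂ) * F x) := integral_integral_swap h2
    _ = 0 := by
        simp_rw [integral_const_mul, hz]; simp

theorem stmt10 (ε : ℝ) (hε : 0 < ε) :
    ∃ χ : ℝ → ℝ, ContDiff ℝ (⊤ : ℕ∞) χ ∧ (∀ x, χ x ∈ Set.Icc (-1 : ℝ) 1) ∧
      (∀ x, χ (-x) = - χ x) ∧ (∀ x > 0, 0 < χ x) ∧
      Filter.Tendsto χ Filter.atTop (nhds 1) ∧
      Filter.Tendsto χ Filter.atBot (nhds (-1)) ∧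
      (∀ φ : SchwartzMap ℝ ℂ, tsupport (fun x : ℝ => φ x) ∩ Set.Ioo (-ε) ε = ∅ →
        ∫ x : ℝ, (χ x : ℂ) * 𝓕 (fun y : ℝ => φ y) x = 0) := by
  obtain ⟨G, h, hG, hGh, h0, he, hpos, hsm, hi⟩ := lemA ε hε
  have hc : Continuous h := hsm.continuous
  set H : ℝ → ℝ := fun x => ∫ s in (0:ℝ)..x, h s with hH
  have hderiv : ∀ x, HasDerivAt H (h x) x := fun x =>
    intervalIntegral.integral_hasDerivAt_right (hc.intervalIntegrable _ _)
      (hc.stronglyMeasurableAtFilter _ _) hc.continuousAt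
  have hHs : ContDiff ℝ (⊤ : ℕ∞) H := by
    rw [contDiff_infty_iff_deriv]
    refine ⟨fun x => (hderiv x).differentiableAt, ?_⟩
    rw [show deriv H = h from funext fun x => (hderiv x).deriv]
    exact hsm
  have hmono : Monotone H := monotone_of_deriv_nonneg (fun x => (hderiv x).differentiableAt)
    (fun x => by rw [(hderiv x).deriv]; exact h0 x)
  have hodd : ∀ x, H (-x) = - H x := by
    intro x
    have := intervalIntegral.integral_comp_neg (a := 0) (b := x) h
    simp only [he, neg_zero] at this
    simp only [hH]
    rw [this, intervalIntegral.integral_symm]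
  have hHpos : ∀ x > 0, 0 < H x := by
    intro x hx
    apply intervalIntegral.integral_pos hx hc.continuousOn (fun y _ => h0 y)
    exact ⟨0, ⟨le_rfl, hx.le⟩, hpos⟩
  set J := ∫ s in Set.Ioi 0, h s with hJ
  have hlim : Filter.Tendsto H Filter.atTop (nhds J) :=
    intervalIntegral_tendsto_integral_Ioi 0 hi.integrableOn Filter.tendsto_id
  have hle : ∀ x, H x ≤ J := hmono.ge_of_tendsto hlim
  have hJp : 0 < J := (hHpos 1 one_pos).trans_le (hle 1)
  have hlim1 : Filter.Tendsto (fun x => H x / J) Filter.atTop (nhds 1) := by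
    simpa [hJp.ne'] using hlim.div_const J
  have hle1 : ∀ x, H x / J ≤ 1 := fun x => (div_le_one hJp).2 (hle x)
  have hodd1 : ∀ x, H (-x) / J = - (H x / J) := fun x => by rw [hodd, neg_div]
  refine ⟨fun x => H x / J, hHs.div_const _, fun x => ⟨?_, hle1 x⟩, hodd1, 
    fun x hx => div_pos (hHpos x hx) hJp, hlim1, ?_, ?_⟩
  · have := hle1 (-x)
    rw [hodd1] at this; linarith
  · have := (hlim1.comp Filter.tendsto_neg_atBot_atTop).neg
    refine this.congr fun x => ?_
    simp [hodd1]
  · intro φ hφ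
    have hF : Integrable (𝓕 (fun y : ℝ => φ y)) := by
      rw [← SchwartzMap.fourier_coe]; exact (𝓕 φ).integrable
    have hD := lemD h hi _ hF (fun t => by
      have := lemB ε G hG φ hφ t
      simpa only [hGh] using this)
    simp_rw [← lemC h hi he] at hD
    have : ∀ x, ((H x / J : ℝ) : ℂ) * 𝓕 (fun y : ℝ => φ y) x = (1 / (2 * J) : ℂ) *
        (((2 * ∫ s in (0:ℝ)..x, h s : ℝ) : ℂ) * 𝓕 (fun y : ℝ => φ y) x) := by
      intro x
      have : (J : ℂ) ≠ 0 := by exact_mod_cast hJp.ne'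
      simp only [hH]
      push_cast
      field_simp
    simp_rw [this]
    rw [integral_const_mul, hD, mul_zero]
end

section
/- Let φ ∈ C_c^∞(ℝⁿ) be nonnegative with ∫φ = 1, and for t > 0 set φ_t(x) = t^{−n}φ(x/t). Let f ∈ C^∞(ℝⁿ) have all first partial derivatives bounded (say |∂f/∂x_j| ≤ C for all j), and let supp(φ) ⊆ [−a,a]ⁿ. Then for each 1 ≤ k ≤ n, the commutator [f·∂/∂x_k, u ↦ φ_t∗u], acting on compactly supported smooth functions, extends to a bounded operator on L²(ℝⁿ) whose norm is bounded by C(na‖∂φ/∂x_k‖_{L¹} + ‖φ‖_{L¹}), independently of t. -/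
open MeasureTheory

theorem young_aux {n : ℕ} (g h : (Fin n → ℝ) → ENNReal) (hg : Measurable g) (hh : Measurable h) :
    ∫⁻ x, (∫⁻ y, g (x - y) * h y) ^ (2:ℝ) ≤ (∫⁻ x, g x) ^ (2:ℝ) * ∫⁻ x, h x ^ (2:ℝ) := by
  have hgm : ∀ x : Fin n → ℝ, Measurable (fun y => g (x - y)) := fun x =>
    hg.comp (measurable_const.sub measurable_id)
  have h1 : ∀ x, (∫⁻ y, g (x - y) * h y) ^ (2:ℝ) ≤
      (∫⁻ x, g x) * ∫⁻ y, g (x - y) * h y ^ (2:ℝ) := by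
    intro x
    have hs := ENNReal.lintegral_mul_le_Lp_mul_Lq (volume : Measure (Fin n → ℝ))
      Real.HolderConjugate.two_two
      (f := fun y => g (x - y) ^ (1/2:ℝ)) (g := fun y => g (x - y) ^ (1/2:ℝ) * h y)
      ((hgm x).pow_const _).aemeasurable (((hgm x).pow_const _).mul hh).aemeasurable
    have e0 : ∀ z : ENNReal, (z ^ (1/2:ℝ)) ^ (2:ℝ) = z := by
      intro z; rw [← ENNReal.rpow_mul]; norm_num
    have e1 : ∀ z : ENNReal, z ^ (1/2:ℝ) * z ^ (1/2:ℝ) = z := by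
      intro z
      rw [← ENNReal.rpow_add_of_nonneg _ _ (by norm_num) (by norm_num)]; norm_num
    simp only [Pi.mul_apply, ENNReal.mul_rpow_of_nonneg _ _ (zero_le_two : (0:ℝ) ≤ 2), e0,
      ← mul_assoc, e1] at hs
    calc _ ≤ _ := ENNReal.rpow_le_rpow hs zero_le_two
      _ = _ := by
        rw [ENNReal.mul_rpow_of_nonneg _ _ (zero_le_two : (0:ℝ) ≤ 2), e0, e0,
          lintegral_sub_left_eq_self]
  calc _ ≤ ∫⁻ x, (∫⁻ x, g x) * ∫⁻ y, g (x - y) * h y ^ (2:ℝ) := lintegral_mono h1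
    _ = (∫⁻ x, g x) * ∫⁻ x, ∫⁻ y, g (x - y) * h y ^ (2:ℝ) := by
      apply lintegral_const_mul
      apply Measurable.lintegral_prod_right'
        (f := fun p : (Fin n → ℝ) × (Fin n → ℝ) => g (p.1 - p.2) * h p.2 ^ (2:ℝ))
      exact (hg.comp (measurable_fst.sub measurable_snd)).mul ((hh.comp measurable_snd).pow_const _)
    _ = (∫⁻ x, g x) * ∫⁻ y, ∫⁻ x, g (x - y) * h y ^ (2:ℝ) := by
      rw [lintegral_lintegral_swap]
      apply Measurable.aemeasurable
      exact (hg.comp (measurable_fst.sub measurable_snd)).mul ((hh.comp measurable_snd).pow_const _)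
    _ = (∫⁻ x, g x) * ∫⁻ y, (∫⁻ x, g x) * h y ^ (2:ℝ) := by
      congr 2; ext y
      have hm : Measurable (fun x : Fin n → ℝ => g (x - y)) :=
        hg.comp (measurable_id.sub measurable_const)
      rw [lintegral_mul_const _ hm,
        lintegral_sub_right_eq_self g]
    _ = _ := by
      rw [lintegral_const_mul _ (hh.pow_const _), ← mul_assoc]
      congr 1
      rw [ENNReal.rpow_two, sq]

theorem young_L2 {n : ℕ} (F u : (Fin n → ℝ) → ℂ) (g : (Fin n → ℝ) → ℝ) (hg : Continuous g)
    (hgi : Integrable g) (hg0 : ∀ x, 0 ≤ g x) (hu : Continuous u)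
    (hF : ∀ x, ‖F x‖ₑ ≤ ∫⁻ y, ENNReal.ofReal (g (x - y)) * ‖u y‖ₑ) :
    eLpNorm F 2 volume ≤ ENNReal.ofReal (∫ x, g x) * eLpNorm u 2 volume := by
  rw [eLpNorm_eq_lintegral_rpow_enorm_toReal (by norm_num) (by norm_num),
    eLpNorm_eq_lintegral_rpow_enorm_toReal (by norm_num) (by norm_num),
    ofReal_integral_eq_lintegral_ofReal hgi (Filter.Eventually.of_forall hg0)]
  simp only [ENNReal.toReal_ofNat]
  have := young_aux (fun x => ENNReal.ofReal (g x)) (fun x => ‖u x‖ₑ)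
    hg.measurable.ennreal_ofReal hu.measurable.enorm
  have h2 : ∫⁻ x, ‖F x‖ₑ ^ (2:ℝ) ≤ _ :=
    (lintegral_mono fun x => ENNReal.rpow_le_rpow (hF x) zero_le_two).trans this
  have h3 := ENNReal.rpow_le_rpow h2 (z := 1/2) (by norm_num)
  rw [ENNReal.mul_rpow_of_nonneg _ _ (by norm_num : (0:ℝ) ≤ 1/2), ← ENNReal.rpow_mul] at h3
  norm_num at h3 ⊢
  exact h3

theorem lip_aux {n : ℕ} (f : (Fin n → ℝ) → ℝ) (hf : ContDiff ℝ (⊤ : ℕ∞) f) (C : ℝ)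
    (hC : ∀ (j : Fin n) (x : Fin n → ℝ), |fderiv ℝ f x (Pi.single j 1)| ≤ C)
    (x y : Fin n → ℝ) : |f x - f y| ≤ n * C * ‖x - y‖ := by
  have hd : Differentiable ℝ f := hf.differentiable (by simp)
  cases n with
  | zero => simp [Subsingleton.elim x y]
  | succ m =>
  have hC0 : 0 ≤ C := (abs_nonneg _).trans (hC 0 x)
  refine Convex.norm_image_sub_le_of_norm_fderiv_le (𝕜 := ℝ) (s := Set.univ)
    (fun z _ => hd z) (fun z _ => ?_) convex_univ (Set.mem_univ _) (Set.mem_univ _)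
  refine ContinuousLinearMap.opNorm_le_bound _ (by positivity) fun v => ?_
  have hv : v = ∑ i, v i • (Pi.single i 1 : Fin (m+1) → ℝ) := by
    ext j; simp [Finset.sum_apply, Pi.single_apply]
  conv_lhs => rw [hv, map_sum]
  refine (norm_sum_le _ _).trans ?_
  calc _ ≤ ∑ i : Fin (m+1), C * ‖v‖ := by
        apply Finset.sum_le_sum; intro i _
        rw [map_smul, norm_smul, mul_comm]
        exact mul_le_mul (hC i z) (norm_le_pi_norm v i) (norm_nonneg _) hC0
    _ = _ := by simp; ring

theorem kernel_aux {n : ℕ} (ψ f : (Fin n → ℝ) → ℝ) (u : (Fin n → ℝ) → ℂ)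
    (hψ : ContDiff ℝ (⊤ : ℕ∞) ψ) (hψc : HasCompactSupport ψ) (hf : ContDiff ℝ (⊤ : ℕ∞) f)
    (hu : ContDiff ℝ (⊤ : ℕ∞) u) (huc : HasCompactSupport u) (v x : Fin n → ℝ) :
    (f x : ℂ) * fderiv ℝ (fun z => ∫ y, ((ψ (z - y) : ℝ) : ℂ) * u y) x v
      - ∫ y, ((ψ (x - y) : ℝ) : ℂ) * ((f y : ℂ) * fderiv ℝ u y v)
    = ∫ y, ((fderiv ℝ ψ (x - y) v * (f x - f y) + ψ (x - y) * fderiv ℝ f y v : ℝ) : ℂ) * u y := by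
  have hψd : Differentiable ℝ ψ := hψ.differentiable (by simp)
  have hfd : Differentiable ℝ f := hf.differentiable (by simp)
  have hud : Differentiable ℝ u := hu.differentiable (by simp)
  have cψ : Continuous fun y => fderiv ℝ ψ y v :=
    (hψ.continuous_fderiv (by simp)).clm_apply continuous_const
  have cf : Continuous fun y => fderiv ℝ f y v :=
    (hf.continuous_fderiv (by simp)).clm_apply continuous_const
  have cu : Continuous fun y => fderiv ℝ u y v :=
    (hu.continuous_fderiv (by simp)).clm_apply continuous_const
  have ccψ := hψ.continuous
  have ccf := hf.continuous
  have ccu := hu.continuous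
  have hint : ∀ w : (Fin n → ℝ) → ℝ, Continuous w → Integrable (fun y => (w y : ℂ) * u y) := by
    intro w hw
    exact Continuous.integrable_of_hasCompactSupport (by fun_prop) huc.mul_left
  -- derivative of the convolution
  have hd : fderiv ℝ (fun z => ∫ y, ((ψ (z - y) : ℝ) : ℂ) * u y) x v
      = ∫ y, ((fderiv ℝ ψ (x - y) v : ℝ) : ℂ) * u y := by
    have := hψc.hasFDerivAt_convolution_right (μ := volume)
      ((ContinuousLinearMap.lsmul ℝ ℝ : ℝ →L[ℝ] ℂ →L[ℝ] ℂ).flip)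
      ccu.locallyIntegrable (hψ.of_le (by simp)) x
    have e : (fun z => ∫ y, ((ψ (z - y) : ℝ) : ℂ) * u y) = MeasureTheory.convolution u ψ
      ((ContinuousLinearMap.lsmul ℝ ℝ : ℝ →L[ℝ] ℂ →L[ℝ] ℂ).flip) volume := by
      ext z; simp [convolution_def]
    rw [e, this.fderiv, convolution_precompR_apply _ ccu.locallyIntegrable (hψc.fderiv ℝ)
      (hψ.continuous_fderiv (by simp))]
    simp [convolution_def]
  -- integration by parts
  have hder : ∀ y, fderiv ℝ (fun y => ψ (x - y) * f y) y v
      = -(fderiv ℝ ψ (x - y) v) * f y + ψ (x - y) * fderiv ℝ f y v := by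
    intro y
    have h1 : HasFDerivAt (fun y => ψ (x - y)) (-(fderiv ℝ ψ (x - y))) y := by
      have := (hψd (x - y)).hasFDerivAt.comp y ((hasFDerivAt_id y).const_sub x)
      convert! this using 1
      ext; simp
    have h2 : HasFDerivAt (fun y => ψ (x - y) * f y) _ y := h1.mul (hfd y).hasFDerivAt
    rw [h2.fderiv]
    simp; ring
  have hparts : ∫ y, ((ψ (x - y) : ℝ) : ℂ) * ((f y : ℂ) * fderiv ℝ u y v)
      = - ∫ y, ((-(fderiv ℝ ψ (x - y) v) * f y + ψ (x - y) * fderiv ℝ f y v : ℝ) : ℂ) * u y := by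
    have := integral_smul_fderiv_eq_neg_fderiv_smul_of_integrable (μ := volume) (𝕜 := ℝ)
      (f := fun y => ψ (x - y) * f y) (g := u) (v := v)
      (by
        simp only [hder, Complex.real_smul]
        exact hint _ (by fun_prop))
      (by
        apply Continuous.integrable_of_hasCompactSupport (by fun_prop)
        exact (huc.fderiv_apply ℝ v).smul_left)
      (by
        simp only [Complex.real_smul]
        exact hint _ (by fun_prop))
      (fun y _ => by fun_prop)
      (fun y _ => hud y)
    simp only [hder, Complex.real_smul] at this
    rw [← this]
    congr 1; ext y; push_cast; ring
  rw [hd, hparts, sub_neg_eq_add, ← integral_const_mul, ← integral_add]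
  · congr 1; ext y; push_cast; ring
  · exact (hint _ (by fun_prop)).const_mul _
  · exact hint _ (by fun_prop)

theorem stmt17 (n : ℕ) (φ : (Fin n → ℝ) → ℝ) (hφ : ContDiff ℝ (⊤ : ℕ∞) φ)
    (hφc : HasCompactSupport φ) (hφ0 : ∀ x, 0 ≤ φ x) (hφ1 : ∫ x, φ x = 1)
    (a : ℝ) (ha : 0 < a) (hsupp : tsupport φ ⊆ {x : Fin n → ℝ | ∀ i, |x i| ≤ a})
    (f : (Fin n → ℝ) → ℝ) (hf : ContDiff ℝ (⊤ : ℕ∞) f) (C : ℝ) (hC0 : 0 ≤ C)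
    (hC : ∀ (j : Fin n) (x : Fin n → ℝ), |fderiv ℝ f x (Pi.single j 1)| ≤ C)
    (k : Fin n) (t : ℝ) (ht : 0 < t) :
    ∀ u : (Fin n → ℝ) → ℂ, ContDiff ℝ (⊤ : ℕ∞) u → HasCompactSupport u →
      eLpNorm (fun x : Fin n → ℝ =>
          (f x : ℂ) *
            fderiv ℝ (fun z : Fin n → ℝ =>
              ∫ y, ((t ^ (-(n : ℤ)) * φ (t⁻¹ • (z - y)) : ℝ) : ℂ) * u y) x (Pi.single k 1)
          - ∫ y, ((t ^ (-(n : ℤ)) * φ (t⁻¹ • (x - y)) : ℝ) : ℂ) *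
              ((f y : ℂ) * fderiv ℝ u y (Pi.single k 1))) 2 volume
        ≤ ENNReal.ofReal
            (C * (n * a * (∫ y, |fderiv ℝ φ y (Pi.single k 1)|) + ∫ y, φ y)) *
          eLpNorm u 2 volume := by
  intro u hu huc
  set v : Fin n → ℝ := Pi.single k 1 with hv
  set c : ℝ := t ^ (-(n : ℤ)) with hc
  have hcpos : 0 < c := by positivity
  have hφd : Differentiable ℝ φ := hφ.differentiable (by simp)
  have cφ : Continuous fun y => fderiv ℝ φ y v :=
    (hφ.continuous_fderiv (by simp)).clm_apply continuous_const
  have ccφ := hφ.continuous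
  have hψ : ContDiff ℝ (⊤ : ℕ∞) (fun w : Fin n → ℝ => c * φ (t⁻¹ • w)) :=
    contDiff_const.mul (hφ.comp (contDiff_const_smul _))
  have hψc : HasCompactSupport (fun w : Fin n → ℝ => c * φ (t⁻¹ • w)) :=
    (hφc.comp_smul (inv_ne_zero ht.ne')).mul_left
  have hψk : ∀ w, fderiv ℝ (fun w : Fin n → ℝ => c * φ (t⁻¹ • w)) w v
      = c * t⁻¹ * fderiv ℝ φ (t⁻¹ • w) v := by
    intro w
    have h1 := (hφd (t⁻¹ • w)).hasFDerivAt.comp w ((hasFDerivAt_id w).const_smul t⁻¹)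
    have h2 := h1.const_mul c
    have h3 := h2.fderiv
    simp only [Function.comp_def, id] at h3
    rw [h3]
    simp; ring
  set g : (Fin n → ℝ) → ℝ := fun w =>
    C * (n * a * (c * |fderiv ℝ φ (t⁻¹ • w) v|) + c * φ (t⁻¹ • w)) with hg
  have i1 : Integrable (fun w => |fderiv ℝ φ w v|) :=
    (cφ.integrable_of_hasCompactSupport (hφc.fderiv_apply ℝ v)).abs
  have i2 : Integrable φ := ccφ.integrable_of_hasCompactSupport hφc
  have j1 := i1.comp_smul (inv_ne_zero ht.ne')
  have j2 := i2.comp_smul (inv_ne_zero ht.ne')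
  have hgi : Integrable g := (((j1.const_mul c).const_mul (n * a)).add (j2.const_mul c)).const_mul C
  have hsc : ∀ F : (Fin n → ℝ) → ℝ, c * ∫ w, F (t⁻¹ • w) = ∫ w, F w := by
    intro F
    rw [Measure.integral_comp_inv_smul_of_nonneg _ _ ht.le]
    simp [hc, ← mul_assoc, ht.ne']
  have hgint : ∫ w, g w = C * (n * a * (∫ y, |fderiv ℝ φ y v|) + ∫ y, φ y) := by
    rw [hg, integral_const_mul, integral_add ((j1.const_mul c).const_mul (n * a)) (j2.const_mul c),
      integral_const_mul, integral_const_mul, integral_const_mul, hsc φ,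
      hsc (fun w => |fderiv ℝ φ w v|)]
  rw [← hgint]
  refine young_L2 _ u g (by fun_prop) hgi ?_ hu.continuous ?_
  · intro w; have := hφ0 (t⁻¹ • w); simp only [hg]; positivity
  intro x
  rw [kernel_aux (fun w => c * φ (t⁻¹ • w)) f u hψ hψc hf hu huc v x]
  refine (enorm_integral_le_lintegral_enorm _).trans (lintegral_mono fun y => ?_)
  rw [enorm_mul]
  gcongr
  rw [← ofReal_norm, Complex.norm_real]
  apply ENNReal.ofReal_le_ofReal
  rw [hψk, Real.norm_eq_abs]
  refine (abs_add_le _ _).trans ?_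
  have b2 : |c * φ (t⁻¹ • (x - y)) * fderiv ℝ f y v| ≤ C * (c * φ (t⁻¹ • (x - y))) := by
    rw [abs_mul, abs_of_nonneg (mul_nonneg hcpos.le (hφ0 _)), mul_comm]
    exact mul_le_mul_of_nonneg_right (hC k y) (mul_nonneg hcpos.le (hφ0 _))
  have b1 : |c * t⁻¹ * fderiv ℝ φ (t⁻¹ • (x - y)) v * (f x - f y)|
      ≤ C * (n * a * (c * |fderiv ℝ φ (t⁻¹ • (x - y)) v|)) := by
    by_cases hm : t⁻¹ • (x - y) ∈ tsupport φ
    · have hle : ‖t⁻¹ • (x - y)‖ ≤ a :=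
        (pi_norm_le_iff_of_nonneg ha.le).2 fun i => hsupp hm i
      rw [norm_smul, Real.norm_eq_abs, abs_of_pos (inv_pos.2 ht)] at hle
      have hl := lip_aux f hf C hC x y
      rw [abs_mul, abs_mul, abs_of_pos (mul_pos hcpos (inv_pos.2 ht))]
      calc _ ≤ c * t⁻¹ * |fderiv ℝ φ (t⁻¹ • (x - y)) v| * (n * C * ‖x - y‖) := by gcongr
        _ = C * n * c * |fderiv ℝ φ (t⁻¹ • (x - y)) v| * (t⁻¹ * ‖x - y‖) := by ring
        _ ≤ C * n * c * |fderiv ℝ φ (t⁻¹ • (x - y)) v| * a := by gcongr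
        _ = _ := by ring
    · have h0 : fderiv ℝ φ (t⁻¹ • (x - y)) = 0 := by
        by_contra h
        exact hm (support_fderiv_subset ℝ h)
      simp [h0]
  simp only [hg]
  rw [mul_add]
  exact add_le_add b1 b2
end
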